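/- arXiv:2507.12078 — 9 statements merged into one kernel-verified Lean document; each statement's English description precedes it below -/
import Mathlib

section
/- For all pairwise distinct natural numbers i, j, k, the triple intersection u i ∩ u j ∩ u k is the empty set (the bottom element of the Boolean algebra Set I). -/
/-- The index set `I = {(n,m) : ℕ × ℕ | n ≤ m}`. -/
def I : Set (ℕ × ℕ) := {p | p.1 ≤ p.2}

/-- The element `u n = {(n,m) | n ≤ m} ∪ {(m,n) | m < n ∧ E m n}` of the Boolean algebra `Set I`. -/
def u (E : ℕ → ℕ → Prop) (n : ℕ) : Set I :=
  {p : I | (p.val.1 = n ∧ n ≤ p.val.2) ∨ (p.val.2 = n ∧ p.val.1 < n ∧ E p.val.1 n)}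

/-- For pairwise distinct `i, j, k`, the triple intersection `u i ∩ u j ∩ u k` is empty. -/
theorem triple_intersection_empty (E : ℕ → ℕ → Prop)
    (hsym : ∀ a b, E a b → E b a) (hirr : ∀ a, ¬ E a a)
    (i j k : ℕ) (hij : i ≠ j) (hjk : j ≠ k) (hik : i ≠ k) :
    u E i ∩ u E j ∩ u E k = ∅ := by
  apply Set.eq_empty_of_forall_notMem
  rintro p ⟨⟨hi, hj⟩, hk⟩
  rcases hi with ⟨h1, -⟩ | ⟨h1, -, -⟩ <;> rcases hj with ⟨h2, -⟩ | ⟨h2, -, -⟩ <;>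
    rcases hk with ⟨h3, -⟩ | ⟨h3, -, -⟩ <;> omega
end

section
/- For all natural numbers i < j: if E i j holds then u i ∩ u j = {(i,j)}, and if E i j does not hold then u i ∩ u j = ∅. -/
/-- For `i < j`: if `E i j` then `u i ∩ u j = {(i,j)}`, and if `¬ E i j` then `u i ∩ u j = ∅`. -/
theorem pairwise_intersection (E : ℕ → ℕ → Prop)
    (hsym : ∀ a b, E a b → E b a) (hirr : ∀ a, ¬ E a a)
    (i j : ℕ) (hij : i < j) :
    (E i j → u E i ∩ u E j = {⟨(i, j), hij.le⟩}) ∧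
    (¬ E i j → u E i ∩ u E j = ∅) := by
  have key : ∀ p : I, p ∈ u E i ∩ u E j ↔ (p.val.1 = i ∧ p.val.2 = j ∧ E i j) := by
    rintro ⟨⟨a, b⟩, hab⟩
    simp only [u, Set.mem_inter_iff, Set.mem_setOf_eq]
    constructor
    · rintro ⟨⟨h1, h2⟩ | ⟨h1, h2, h3⟩, ⟨h4, h5⟩ | ⟨h4, h5, h6⟩⟩
      · omega
      · subst h1
        exact ⟨rfl, h4, h6⟩
      · omega
      · omega
    · rintro ⟨rfl, rfl, h⟩
      exact ⟨Or.inl ⟨rfl, hij.le⟩, Or.inr ⟨rfl, hij, h⟩⟩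
  constructor
  · intro h
    ext p
    rw [key, Set.mem_singleton_iff, Subtype.ext_iff, Prod.ext_iff]
    exact ⟨fun q => ⟨q.1, q.2.1⟩, fun q => ⟨q.1, q.2, h⟩⟩
  · intro h
    ext p
    rw [key]
    exact ⟨fun q => h q.2.2, fun q => q.elim⟩
end

section
/- For all distinct natural numbers i and j: if E i j does not hold then u i \ u j = u i, and if E i j holds then u i \ u j = u i \ {(min i j, max i j)}. -/
/-- For distinct `i, j`: if `¬ E i j` then `u i \ u j = u i`, and if `E i j` then
`u i \ u j = u i \ {(min i j, max i j)}`. -/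
theorem relative_complement (E : ℕ → ℕ → Prop)
    (hsym : ∀ a b, E a b → E b a) (hirr : ∀ a, ¬ E a a)
    (i j : ℕ) (hij : i ≠ j) :
    (¬ E i j → u E i \ u E j = u E i) ∧
    (E i j → u E i \ u E j = u E i \ {⟨(min i j, max i j), by exact (min_le_max : min i j ≤ max i j)⟩}) := by
  constructor
  · intro h
    ext ⟨⟨a, b⟩, hab⟩
    simp only [u, Set.mem_sdiff, Set.mem_ofPred_eq]
    have h' : ¬ E j i := fun h1 => h (hsym _ _ h1)
    grind
  · intro h
    have h' : E j i := hsym _ _ h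
    have key : ∀ q : I, q.val.1 = min i j → q.val.2 = max i j →
        u E i \ u E j = u E i \ {q} := by
      rintro ⟨⟨c, d⟩, hq⟩ hc hd
      ext ⟨⟨a, b⟩, hab⟩
      simp only [u, Set.mem_sdiff, Set.mem_ofPred_eq, Set.mem_singleton_iff, Subtype.mk.injEq,
        Prod.mk.injEq]
      simp only at hc hd
      rcases lt_or_gt_of_ne hij with hlt | hlt
      · rw [min_eq_left hlt.le] at hc
        rw [max_eq_right hlt.le] at hd
        grind
      · rw [min_eq_right hlt.le] at hc
        rw [max_eq_left hlt.le] at hd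
        grind
    exact key _ rfl rfl
end

section
/- For all distinct natural numbers i and j: u i ≠ u j, and u i ∩ u j ≠ ∅ if and only if E i j holds. -/
/-- For distinct `i, j`: `u i ≠ u j`, and `u i ∩ u j ≠ ∅` iff `E i j`. -/
theorem u_injective_and_edge_criterion (E : ℕ → ℕ → Prop)
    (hsym : ∀ a b, E a b → E b a) (hirr : ∀ a, ¬ E a a)
    (i j : ℕ) (hij : i ≠ j) :
    u E i ≠ u E j ∧ (u E i ∩ u E j ≠ ∅ ↔ E i j) := by
  constructor
  · intro h
    have h1 : (⟨(i, i), le_refl i⟩ : I) ∈ u E i := Or.inl ⟨rfl, le_refl i⟩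
    rw [h] at h1
    rcases h1 with h1 | h1
    · exact hij h1.1
    · exact hij h1.1
  · rw [← Set.nonempty_iff_ne_empty]
    constructor
    · rintro ⟨⟨⟨a, b⟩, hp⟩, h1, h2⟩
      rcases h1 with ⟨h1, h1'⟩ | ⟨h1, h1', h1''⟩ <;>
      rcases h2 with ⟨h2, h2'⟩ | ⟨h2, h2', h2''⟩ <;>
      dsimp only at * <;> subst h1
      · exact absurd h2 hij
      · exact h2''
      · subst h2
        exact hsym _ _ h1''
      · exact absurd h2 hij
    · intro hE
      rcases lt_or_gt_of_ne hij with h | h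
      · exact ⟨⟨(i, j), le_of_lt h⟩, Or.inl ⟨rfl, le_of_lt h⟩, Or.inr ⟨rfl, h, hE⟩⟩
      · exact ⟨⟨(j, i), le_of_lt h⟩, Or.inr ⟨rfl, h, hsym _ _ hE⟩, Or.inl ⟨rfl, le_of_lt h⟩⟩
end

section
/- Let L be a Boolean algebra, S a finite subset of L, and B the Boolean subalgebra of L generated by S. Then an element a ∈ L is an atom of B if and only if a ≠ ⊥ and there exists a subset T ⊆ S such that a = (⨅ s ∈ T, s) ⊓ (⨅ s ∈ S \ T, sᶜ), where an empty infimum is interpreted as ⊤. -/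
/-- A Boolean subalgebra of a Boolean algebra, i.e. a subset containing `⊥` and `⊤` and
closed under `⊓`, `⊔`, and complement. -/
def IsBoolSubalg {L : Type*} [BooleanAlgebra L] (B : Set L) : Prop :=
  ⊥ ∈ B ∧ ⊤ ∈ B ∧ (∀ x ∈ B, ∀ y ∈ B, x ⊓ y ∈ B) ∧ (∀ x ∈ B, ∀ y ∈ B, x ⊔ y ∈ B) ∧
    ∀ x ∈ B, xᶜ ∈ B

/-- The Boolean subalgebra generated by a set: the smallest Boolean subalgebra containing it. -/
def boolGen {L : Type*} [BooleanAlgebra L] (S : Set L) : Set L :=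
  ⋂₀ {B | IsBoolSubalg B ∧ S ⊆ B}

/-- `a` is an atom of the Boolean subalgebra `B`: it belongs to `B`, is nonzero, and every
element of `B` below it is `⊥` or `a` itself. -/
def IsAtomOfSet {L : Type*} [BooleanAlgebra L] (B : Set L) (a : L) : Prop :=
  a ∈ B ∧ a ≠ ⊥ ∧ ∀ b ∈ B, b ≤ a → b = ⊥ ∨ b = a

theorem boolGen_isBoolSubalg {L : Type*} [BooleanAlgebra L] (S : Set L) :
    IsBoolSubalg (boolGen S) := by
  refine ⟨fun B hB => hB.1.1, fun B hB => hB.1.2.1, fun x hx y hy B hB => ?_,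
    fun x hx y hy B hB => ?_, fun x hx B hB => ?_⟩
  · exact hB.1.2.2.1 x (hx B hB) y (hy B hB)
  · exact hB.1.2.2.2.1 x (hx B hB) y (hy B hB)
  · exact hB.1.2.2.2.2 x (hx B hB)

theorem subset_boolGen {L : Type*} [BooleanAlgebra L] (S : Set L) : S ⊆ boolGen S :=
  fun _ hx _ hB => hB.2 hx

/-- An element deciding every generator decides every element of the generated subalgebra. -/
theorem boolGen_decides {L : Type*} [BooleanAlgebra L] {S : Set L} {m : L}
    (h : ∀ s ∈ S, m ≤ s ∨ m ≤ sᶜ) {b : L} (hb : b ∈ boolGen S) : m ≤ b ∨ m ≤ bᶜ := by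
  refine hb {b | m ≤ b ∨ m ≤ bᶜ} ⟨⟨?_, ?_, ?_, ?_, ?_⟩, h⟩
  · right; simp
  · left; simp
  · rintro x (hx | hx) y (hy | hy)
    · exact Or.inl (le_inf hx hy)
    · exact Or.inr (by rw [compl_inf]; exact le_sup_of_le_right hy)
    · exact Or.inr (by rw [compl_inf]; exact le_sup_of_le_left hx)
    · exact Or.inr (by rw [compl_inf]; exact le_sup_of_le_left hx)
  · rintro x (hx | hx) y (hy | hy)
    · exact Or.inl (le_sup_of_le_left hx)
    · exact Or.inl (le_sup_of_le_left hx)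
    · exact Or.inl (le_sup_of_le_right hy)
    · exact Or.inr (by rw [compl_sup]; exact le_inf hx hy)
  · rintro x (hx | hx)
    · exact Or.inr (by rwa [compl_compl])
    · exact Or.inl hx

theorem minterm_decides {L : Type*} [BooleanAlgebra L] [DecidableEq L] (S T : Finset L) :
    ∀ s ∈ (↑S : Set L), T.inf id ⊓ (S \ T).inf (fun s => sᶜ) ≤ s ∨
      T.inf id ⊓ (S \ T).inf (fun s => sᶜ) ≤ sᶜ := by
  intro s hs
  by_cases hT : s ∈ T
  · exact Or.inl (inf_le_of_left_le (Finset.inf_le (f := id) hT))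
  · exact Or.inr (inf_le_of_right_le (Finset.inf_le (f := fun s : L => sᶜ)
      (Finset.mem_sdiff.2 ⟨hs, hT⟩)))

/-- An element `a` of a Boolean algebra `L` is an atom of the Boolean subalgebra generated by a
finite subset `S ⊆ L` if and only if `a ≠ ⊥` and `a = (⨅ s ∈ T, s) ⊓ (⨅ s ∈ S \ T, sᶜ)` for
some `T ⊆ S` (empty infima being `⊤`). -/
theorem atoms_of_finitely_generated_boolean_subalgebra
    {L : Type*} [BooleanAlgebra L] [DecidableEq L] (S : Finset L) (a : L) :
    IsAtomOfSet (boolGen (↑S : Set L)) a ↔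
      a ≠ ⊥ ∧ ∃ T ⊆ S, a = T.inf id ⊓ (S \ T).inf (fun s => sᶜ) := by
  classical
  obtain ⟨-, htop, hinf, -, hcompl⟩ := boolGen_isBoolSubalg (↑S : Set L)
  have hS := subset_boolGen (↑S : Set L)
  constructor
  · rintro ⟨ha, ha0, hat⟩
    refine ⟨ha0, S.filter (fun s => a ≤ s), Finset.filter_subset _ _, ?_⟩
    have hle : a ≤ (S.filter (fun s => a ≤ s)).inf id ⊓
        (S \ S.filter (fun s => a ≤ s)).inf (fun s => sᶜ) := by
      refine le_inf (Finset.le_inf fun s hs => (Finset.mem_filter.1 hs).2)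
        (Finset.le_inf fun s hs => ?_)
      obtain ⟨hs, hn⟩ := Finset.mem_sdiff.1 hs
      rcases hat (a ⊓ s) (hinf a ha s (hS hs)) inf_le_left with h | h
      · exact le_compl_iff_disjoint_right.2 (disjoint_iff.2 h)
      · exact absurd (Finset.mem_filter.2 ⟨hs, inf_eq_left.1 h⟩) hn
    rcases boolGen_decides (minterm_decides S (S.filter (fun s => a ≤ s))) ha with h | h
    · exact le_antisymm hle h
    · exact absurd (le_compl_self.1 (hle.trans h)) ha0
  · rintro ⟨ha0, T, hT, rfl⟩
    refine ⟨?_, ha0, fun b hb hba => ?_⟩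
    · refine hinf _ ?_ _ ?_
      · exact Finset.inf_mem _ htop hinf _ _ fun s hs => hS (hT hs)
      · exact Finset.inf_mem _ htop hinf _ _ fun s hs =>
          hcompl s (hS (Finset.mem_sdiff.1 hs).1)
    · rcases boolGen_decides (minterm_decides S T) hb with h | h
      · exact Or.inr (le_antisymm hba h)
      · exact Or.inl (le_compl_self.1 (hba.trans h))
end

section
/- Let i_1, …, i_k be pairwise distinct natural numbers and let B be the Boolean subalgebra of Set I generated by {u i_1, …, u i_k}. Then for every n with 1 ≤ n ≤ k, the set u i_n \ (⋃ of u i_ℓ over all ℓ ≠ n, 1 ≤ ℓ ≤ k) is an atom of B. -/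
/-- For pairwise distinct `i 1, …, i k` and each position `n`, the set
`u (i n) \ (⋃ ℓ ≠ n, u (i ℓ))` is an atom of the Boolean subalgebra of `Set I` generated by
`{u (i 1), …, u (i k)}`. -/
theorem generator_minus_others_is_atom (E : ℕ → ℕ → Prop)
    (hsym : ∀ a b, E a b → E b a) (hirr : ∀ a, ¬ E a a)
    (k : ℕ) (i : Fin k → ℕ) (hi : Function.Injective i) (n : Fin k) :
    IsAtomOfSet (boolGen (Set.range fun ℓ => u E (i ℓ)))
      (u E (i n) \ ⋃ ℓ, ⋃ (_ : ℓ ≠ n), u E (i ℓ)) := by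
  refine ⟨?_, ?_, ?_⟩
  · rintro B ⟨⟨hbot, htop, hinf, hsup, hcompl⟩, hS⟩
    have hu : ∀ ℓ, u E (i ℓ) ∈ B := fun ℓ => hS ⟨ℓ, rfl⟩
    have hsc : SupClosed B := fun x hx y hy => hsup x hx y hy
    have hU : (⋃ ℓ, ⋃ (_ : ℓ ≠ n), u E (i ℓ)) ∈ B := by
      refine hsc.iSup_mem hbot fun ℓ => ?_
      exact hsc.iSup_mem hbot fun _ => hu ℓ
    rw [Set.diff_eq]
    exact hinf _ (hu n) _ (hcompl _ hU)
  · intro h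
    have hx : (⟨(i n, i n), le_refl (i n)⟩ : I) ∈
        (u E (i n) \ ⋃ ℓ, ⋃ (_ : ℓ ≠ n), u E (i ℓ)) := by
      refine ⟨Or.inl ⟨rfl, le_refl _⟩, ?_⟩
      simp only [Set.mem_iUnion, not_exists]
      rintro ℓ hℓ (⟨h1, -⟩ | ⟨h1, -⟩) <;> exact hℓ (hi h1.symm)
    rw [h] at hx
    exact hx
  · intro b hb hle
    have key : ∀ x ∈ (u E (i n) \ ⋃ ℓ, ⋃ (_ : ℓ ≠ n), u E (i ℓ)),
        ∀ y ∈ (u E (i n) \ ⋃ ℓ, ⋃ (_ : ℓ ≠ n), u E (i ℓ)), (x ∈ b ↔ y ∈ b) := by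
      refine hb {b | ∀ x ∈ (u E (i n) \ ⋃ ℓ, ⋃ (_ : ℓ ≠ n), u E (i ℓ)),
        ∀ y ∈ (u E (i n) \ ⋃ ℓ, ⋃ (_ : ℓ ≠ n), u E (i ℓ)), (x ∈ b ↔ y ∈ b)} ⟨⟨?_, ?_, ?_, ?_, ?_⟩, ?_⟩
      · exact fun x _ y _ => Iff.rfl
      · exact fun x _ y _ => Iff.rfl
      · exact fun p hp q hq x hx y hy => and_congr (hp x hx y hy) (hq x hx y hy)
      · exact fun p hp q hq x hx y hy => or_congr (hp x hx y hy) (hq x hx y hy)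
      · exact fun p hp x hx y hy => not_congr (hp x hx y hy)
      · rintro _ ⟨ℓ, rfl⟩ x hx y hy
        by_cases hℓ : ℓ = n
        · subst hℓ
          exact ⟨fun _ => hy.1, fun _ => hx.1⟩
        · exact ⟨fun h => absurd (Set.mem_iUnion₂.2 ⟨ℓ, hℓ, h⟩) hx.2,
            fun h => absurd (Set.mem_iUnion₂.2 ⟨ℓ, hℓ, h⟩) hy.2⟩
    rcases Set.eq_empty_or_nonempty b with h | ⟨x, hx⟩
    · exact Or.inl h
    · exact Or.inr (le_antisymm hle fun y hy => (key x (hle hx) y hy).1 hx)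
end

section
/- Let i_1, …, i_k be pairwise distinct natural numbers and let B be the Boolean subalgebra of Set I generated by {u i_1, …, u i_k}. Then for all n, m with 1 ≤ n, m ≤ k, i_n < i_m, and E i_n i_m, the singleton {(i_n, i_m)}, which equals u i_n ∩ u i_m, is an atom of B. -/
/-- For pairwise distinct `i 1, …, i k` and positions `n, m` with `i n < i m` and `E (i n) (i m)`,
the singleton `{(i n, i m)}`, which equals `u (i n) ∩ u (i m)`, is an atom of the Boolean
subalgebra of `Set I` generated by `{u (i 1), …, u (i k)}`. -/
theorem singleton_is_atom (E : ℕ → ℕ → Prop)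
    (hsym : ∀ a b, E a b → E b a) (hirr : ∀ a, ¬ E a a)
    (k : ℕ) (i : Fin k → ℕ) (hi : Function.Injective i)
    (n m : Fin k) (hnm : i n < i m) (hE : E (i n) (i m)) :
    ({⟨(i n, i m), by exact hnm.le⟩} : Set I) = u E (i n) ∩ u E (i m) ∧
    IsAtomOfSet (boolGen (Set.range fun ℓ => u E (i ℓ)))
      {⟨(i n, i m), by exact hnm.le⟩} := by
  have key : ({⟨(i n, i m), by exact hnm.le⟩} : Set I) = u E (i n) ∩ u E (i m) := by
    ext ⟨⟨a, b⟩, hab⟩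
    simp only [u, Set.mem_singleton_iff, Set.mem_inter_iff, Set.mem_ofPred_eq]
    constructor
    · rintro ⟨rfl, rfl⟩
      exact ⟨Or.inl ⟨rfl, hnm.le⟩, Or.inr ⟨rfl, hnm, hE⟩⟩
    · rintro ⟨h1 | h1, h2 | h2⟩ <;> refine Subtype.ext (Prod.ext ?_ ?_) <;> dsimp only <;> omega
  refine ⟨key, ?_, ?_, ?_⟩
  · rw [key]
    rintro B ⟨hB, hS⟩
    exact hB.2.2.1 _ (hS ⟨n, rfl⟩) _ (hS ⟨m, rfl⟩)
  · exact Set.singleton_ne_empty _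
  · intro b _ hb
    exact Set.subset_singleton_iff_eq.1 hb
end

section
/- Let i_1, …, i_k be pairwise distinct natural numbers and let B be the Boolean subalgebra of Set I generated by {u i_1, …, u i_k}. Then every atom of B is of exactly one of the following forms, and all of the listed elements are pairwise distinct: (i) I \ (u i_1 ∪ ⋯ ∪ u i_k); (ii) u i_n \ (⋃ of u i_ℓ over ℓ ≠ n) for some 1 ≤ n ≤ k; (iii) {(i_n, i_m)} for some n, m with i_n < i_m and E i_n i_m. -/
/-- The set of points with the same membership pattern as `p`. -/
def cell {X : Type*} {k : ℕ} (f : Fin k → Set X) (p : X) : Set X :=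
  {q | ∀ l, q ∈ f l ↔ p ∈ f l}

theorem cell_mem {X : Type*} {k : ℕ} (f : Fin k → Set X) (p : X) :
    cell f p ∈ boolGen (Set.range f) := by
  obtain ⟨_, h1, h2, _, h4⟩ := boolGen_isBoolSubalg (Set.range f)
  have key : ∀ s : Finset (Fin k),
      {q | ∀ l ∈ s, (q ∈ f l ↔ p ∈ f l)} ∈ boolGen (Set.range f) := by
    intro s
    induction s using Finset.induction_on with
    | empty => simpa using h1
    | insert a s _ ih =>
      have hfa : f a ∈ boolGen (Set.range f) := subset_boolGen _ ⟨a, rfl⟩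
      by_cases hp : p ∈ f a
      · convert h2 _ hfa _ ih using 1
        ext q; simp [hp]
      · convert h2 _ (h4 _ hfa) _ ih using 1
        ext q; simp [hp]
  simpa [cell] using key Finset.univ

theorem cell_iff {X : Type*} {k : ℕ} (f : Fin k → Set X) (p q : X) (hq : q ∈ cell f p)
    (b : Set X) (hb : b ∈ boolGen (Set.range f)) : q ∈ b ↔ p ∈ b := by
  refine hb {b | q ∈ b ↔ p ∈ b} ⟨⟨?_, ?_, ?_, ?_, ?_⟩, ?_⟩
  · simp
  · simp
  · intro x hx y hy; exact and_congr hx hy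
  · intro x hx y hy; exact or_congr hx hy
  · intro x hx; exact not_congr hx
  · rintro _ ⟨l, rfl⟩; exact hq l

theorem atom_eq_cell {X : Type*} {k : ℕ} (f : Fin k → Set X) (a : Set X)
    (ha : IsAtomOfSet (boolGen (Set.range f)) a) : ∃ p ∈ a, a = cell f p := by
  obtain ⟨h1, h2, h3⟩ := ha
  obtain ⟨p, hp⟩ := Set.nonempty_iff_ne_empty.2 h2
  refine ⟨p, hp, ?_⟩
  have hsub : cell f p ⊆ a := fun q hq => (cell_iff f p q hq a h1).2 hp
  have hpc : p ∈ cell f p := fun _ => Iff.rfl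
  rcases h3 _ (cell_mem f p) hsub with h | h
  · rw [h] at hpc; exact hpc.elim
  · exact h.symm

theorem mem_two {E : ℕ → ℕ → Prop} {a b : ℕ} (hab : a < b) {q : I}
    (ha : q ∈ u E a) (hb : q ∈ u E b) : q.val = (a, b) ∧ E a b := by
  obtain ⟨⟨x, y⟩, hq⟩ := q
  simp only [u, Set.mem_ofPred_eq, Prod.mk.injEq] at *
  rcases ha with ⟨rfl, h⟩ | ⟨rfl, h, _⟩ <;> rcases hb with ⟨rfl, h'⟩ | ⟨rfl, h', h''⟩
  · omega
  · exact ⟨⟨rfl, rfl⟩, h''⟩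
  · omega
  · omega

theorem mem_u_big {E : ℕ → ℕ → Prop} {a b M : ℕ} (h : a ≤ M) (hM : b < M) :
    (⟨(a, M), h⟩ : I) ∈ u E b ↔ a = b := by
  simp only [u, Set.mem_ofPred_eq]
  constructor
  · rintro (h | h) <;> omega
  · intro h; left; omega

/-- For pairwise distinct `i 1, …, i k`, every atom of the Boolean subalgebra of `Set I`
generated by `{u (i 1), …, u (i k)}` is of exactly one of the forms
(i) `I \ (u (i 1) ∪ ⋯ ∪ u (i k))`,
(ii) `u (i n) \ (⋃ ℓ ≠ n, u (i ℓ))`,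
(iii) `{(i n, i m)}` with `i n < i m` and `E (i n) (i m)`,
and all the listed elements are pairwise distinct. -/
theorem atoms_classification (E : ℕ → ℕ → Prop)
    (hsym : ∀ a b, E a b → E b a) (hirr : ∀ a, ¬ E a a)
    (k : ℕ) (i : Fin k → ℕ) (hi : Function.Injective i) :
    (∀ a : Set I, IsAtomOfSet (boolGen (Set.range fun ℓ => u E (i ℓ))) a →
        a = (⋃ ℓ, u E (i ℓ))ᶜ ∨
        (∃ n : Fin k, a = u E (i n) \ ⋃ ℓ, ⋃ (_ : ℓ ≠ n), u E (i ℓ)) ∨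
        (∃ n m : Fin k, ∃ h : i n < i m, E (i n) (i m) ∧
          a = ({⟨(i n, i m), by exact h.le⟩} : Set I))) ∧
    -- the element of form (i) differs from all elements of form (ii)
    (∀ n : Fin k,
      (⋃ ℓ, u E (i ℓ))ᶜ ≠ u E (i n) \ ⋃ ℓ, ⋃ (_ : ℓ ≠ n), u E (i ℓ)) ∧
    -- the element of form (i) differs from all elements of form (iii)
    (∀ n m : Fin k, ∀ h : i n < i m, E (i n) (i m) →
      (⋃ ℓ, u E (i ℓ))ᶜ ≠ ({⟨(i n, i m), by exact h.le⟩} : Set I)) ∧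
    -- elements of form (ii) differ from all elements of form (iii)
    (∀ n n' m' : Fin k, ∀ h : i n' < i m', E (i n') (i m') →
      u E (i n) \ (⋃ ℓ, ⋃ (_ : ℓ ≠ n), u E (i ℓ)) ≠ ({⟨(i n', i m'), by exact h.le⟩} : Set I)) ∧
    -- the elements of form (ii) are pairwise distinct
    (∀ n n' : Fin k,
      u E (i n) \ (⋃ ℓ, ⋃ (_ : ℓ ≠ n), u E (i ℓ)) =
        u E (i n') \ (⋃ ℓ, ⋃ (_ : ℓ ≠ n'), u E (i ℓ)) → n = n') ∧
    -- the elements of form (iii) are pairwise distinct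
    (∀ n m n' m' : Fin k, ∀ h : i n < i m, ∀ h' : i n' < i m', E (i n) (i m) → E (i n') (i m') →
      ({⟨(i n, i m), by exact h.le⟩} : Set I) = ({⟨(i n', i m'), by exact h'.le⟩} : Set I) →
      n = n' ∧ m = m') := by
  classical
  obtain ⟨M, hM⟩ : ∃ M, ∀ l, i l < M :=
    ⟨Finset.univ.sup i + 1, fun l => Nat.lt_succ_of_le (Finset.le_sup (Finset.mem_univ l))⟩
  have memi : (⟨(M, M), le_refl M⟩ : I) ∈ (⋃ ℓ, u E (i ℓ))ᶜ := by
    simp only [Set.mem_compl_iff, Set.mem_iUnion, not_exists]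
    intro l hl
    rw [mem_u_big _ (hM l)] at hl
    have := hM l
    omega
  have memii : ∀ n, (⟨(i n, M), (hM n).le⟩ : I) ∈
      u E (i n) \ ⋃ ℓ, ⋃ (_ : ℓ ≠ n), u E (i ℓ) := by
    intro n
    refine ⟨(mem_u_big _ (hM n)).2 rfl, ?_⟩
    simp only [Set.mem_iUnion, not_exists]
    intro l hl h
    rw [mem_u_big _ (hM l)] at h
    exact hl (hi h.symm)
  refine ⟨?_, ?_, ?_, ?_, ?_, ?_⟩
  · intro a ha
    obtain ⟨p, -, rfl⟩ := atom_eq_cell _ a ha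
    by_cases h0 : ∃ n, p ∈ u E (i n)
    · obtain ⟨n, hn⟩ := h0
      right
      by_cases h1 : ∃ m, m ≠ n ∧ p ∈ u E (i m)
      · obtain ⟨m, hmn, hm⟩ := h1
        right
        have key : ∀ n m : Fin k, i n < i m → p ∈ u E (i n) → p ∈ u E (i m) →
            ∃ n m : Fin k, ∃ h : i n < i m, E (i n) (i m) ∧
              cell (fun ℓ => u E (i ℓ)) p = ({⟨(i n, i m), by exact h.le⟩} : Set I) := by
          intro n m h hn hm
          obtain ⟨e, he⟩ := mem_two h hn hm
          refine ⟨n, m, h, he, ?_⟩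
          ext q
          simp only [Set.mem_singleton_iff]
          constructor
          · intro hq
            exact Subtype.ext (mem_two h ((hq n).2 hn) ((hq m).2 hm)).1
          · intro hq
            have : q = p := by rw [hq]; exact Subtype.ext e.symm
            rw [this]; exact fun _ => Iff.rfl
        rcases lt_or_gt_of_ne (fun h => hmn (hi h)) with h | h
        · exact key m n h hm hn
        · exact key n m h hn hm
      · left
        refine ⟨n, ?_⟩
        push Not at h1
        ext q
        simp only [cell, Set.mem_ofPred_eq, Set.mem_diff, Set.mem_iUnion, not_exists]
        constructor
        · intro hq
          exact ⟨(hq n).2 hn, fun l hl h => h1 l hl ((hq l).1 h)⟩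
        · rintro ⟨hq, hq'⟩ l
          by_cases hl : l = n
          · subst hl; exact iff_of_true hq hn
          · exact iff_of_false (hq' l hl) (h1 l hl)
    · left
      push Not at h0
      ext q
      simp [cell, h0]
  · intro n h
    have h' := memii n
    rw [← h] at h'
    exact h' (Set.mem_iUnion.2 ⟨n, (memii n).1⟩)
  · intro n m h _ he
    rw [he] at memi
    have := congrArg (fun p : I => p.val.2) (Set.mem_singleton_iff.1 memi)
    exact absurd this (hM m).ne'
  · intro n n' m' h _ he
    have h' := memii n
    rw [he] at h'
    have := congrArg (fun p : I => p.val.2) (Set.mem_singleton_iff.1 h')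
    exact absurd this (hM m').ne'
  · intro n n' he
    have h' := memii n
    rw [he] at h'
    exact hi ((mem_u_big _ (hM n')).1 h'.1)
  · intro n m n' m' h h' _ _ he
    have := congrArg Subtype.val (Set.singleton_injective he)
    simp only [Prod.mk.injEq] at this
    exact ⟨hi this.1, hi this.2⟩
end

section
/- Let i_1, …, i_k and j_1, …, j_k be two tuples of pairwise distinct natural numbers such that for all 1 ≤ n, m ≤ k one has (E i_n i_m ↔ E j_n j_m) and (i_n < i_m ↔ j_n < j_m). Then there exists an isomorphism of Boolean algebras g from the Boolean subalgebra of Set I generated by {u i_1, …, u i_k} onto the Boolean subalgebra generated by {u j_1, …, u j_k} such that g (u i_ℓ) = u j_ℓ for every 1 ≤ ℓ ≤ k. -/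
/-- The set of indices `ℓ` with `p ∈ u (i ℓ)`. -/
def pat (E : ℕ → ℕ → Prop) {k : ℕ} (i : Fin k → ℕ) (p : I) : Set (Fin k) :=
  {ℓ | p ∈ u E (i ℓ)}

theorem boolGen_form (E : ℕ → ℕ → Prop) {k : ℕ} (i j : Fin k → ℕ) (x : Set I)
    (hx : x ∈ boolGen (Set.range fun ℓ => u E (i ℓ))) :
    ∃ A : Set (Set (Fin k)), x = pat E i ⁻¹' A ∧
      pat E j ⁻¹' A ∈ boolGen (Set.range fun ℓ => u E (j ℓ)) := by
  have hG := boolGen_isBoolSubalg (Set.range fun ℓ => u E (j ℓ))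
  obtain ⟨h0, h1, hI, hU, hC⟩ := hG
  refine hx {x | ∃ A : Set (Set (Fin k)), x = pat E i ⁻¹' A ∧
      pat E j ⁻¹' A ∈ boolGen (Set.range fun ℓ => u E (j ℓ))} ⟨⟨?_, ?_, ?_, ?_, ?_⟩, ?_⟩
  · exact ⟨∅, rfl, h0⟩
  · exact ⟨Set.univ, rfl, h1⟩
  · rintro _ ⟨A, rfl, hA⟩ _ ⟨B, rfl, hB⟩
    exact ⟨A ∩ B, rfl, hI _ hA _ hB⟩
  · rintro _ ⟨A, rfl, hA⟩ _ ⟨B, rfl, hB⟩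
    exact ⟨A ∪ B, rfl, hU _ hA _ hB⟩
  · rintro _ ⟨A, rfl, hA⟩
    exact ⟨Aᶜ, rfl, hC _ hA⟩
  · rintro _ ⟨ℓ, rfl⟩
    exact ⟨{s | ℓ ∈ s}, rfl, subset_boolGen _ ⟨ℓ, rfl⟩⟩

theorem pat_range (E : ℕ → ℕ → Prop)
    (k : ℕ) (i j : Fin k → ℕ)
    (hi : Function.Injective i) (hj : Function.Injective j)
    (hE : ∀ n m : Fin k, E (i n) (i m) ↔ E (j n) (j m))
    (hord : ∀ n m : Fin k, i n < i m ↔ j n < j m) (p : I) :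
    ∃ q : I, pat E j q = pat E i p := by
  obtain ⟨⟨a, b⟩, hab⟩ := p
  have hab' : a ≤ b := hab
  -- the pattern of a diagonal point
  have hdiag : ∀ n, pat E j ⟨(j n, j n), le_refl (j n)⟩ = {n} := by
    intro n
    ext ℓ
    simp only [pat, u, Set.mem_setOf_eq, Set.mem_singleton_iff]
    constructor
    · rintro (⟨h, -⟩ | ⟨h, h', -⟩)
      · exact (hj h).symm
      · omega
    · rintro rfl
      exact Or.inl ⟨rfl, le_rfl⟩
  by_cases ha : ∃ n, i n = a
  · obtain ⟨n, rfl⟩ := ha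
    by_cases hb : ∃ m, i m = b ∧ i n < i m ∧ E (i n) (i m)
    · obtain ⟨m, rfl, hlt, he⟩ := hb
      have hlt' := (hord n m).1 hlt
      have he' := (hE n m).1 he
      refine ⟨⟨(j n, j m), hlt'.le⟩, ?_⟩
      ext ℓ
      simp only [pat, u, Set.mem_setOf_eq]
      constructor
      · rintro (⟨h, -⟩ | ⟨h, -⟩)
        · obtain rfl := hj h
          exact Or.inl ⟨rfl, hab'⟩
        · obtain rfl := hj h
          exact Or.inr ⟨rfl, hlt, he⟩
      · rintro (⟨h, -⟩ | ⟨h, -⟩)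
        · obtain rfl := hi h
          exact Or.inl ⟨rfl, hlt'.le⟩
        · obtain rfl := hi h
          exact Or.inr ⟨rfl, hlt', he'⟩
    · refine ⟨_, (hdiag n).trans ?_⟩
      ext ℓ
      simp only [pat, u, Set.mem_setOf_eq, Set.mem_singleton_iff]
      constructor
      · rintro rfl
        exact Or.inl ⟨rfl, hab'⟩
      · rintro (⟨h, -⟩ | ⟨h, h', h''⟩)
        · exact (hi h).symm
        · exact absurd ⟨ℓ, h.symm, h', h''⟩ hb
  · by_cases hb : ∃ m, i m = b ∧ a < i m ∧ E a (i m)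
    · obtain ⟨m, rfl, hlt, he⟩ := hb
      refine ⟨_, (hdiag m).trans ?_⟩
      ext ℓ
      simp only [pat, u, Set.mem_setOf_eq, Set.mem_singleton_iff]
      constructor
      · rintro rfl
        exact Or.inr ⟨rfl, hlt, he⟩
      · rintro (⟨h, -⟩ | ⟨h, -⟩)
        · exact absurd ⟨ℓ, h.symm⟩ ha
        · exact (hi h).symm
    · obtain ⟨N, hN⟩ := (Set.finite_range j).exists_notMem
      refine ⟨⟨(N, N), le_refl N⟩, ?_⟩
      ext ℓ
      simp only [pat, u, Set.mem_setOf_eq]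
      constructor
      · rintro (⟨h, -⟩ | ⟨h, -⟩) <;> exact absurd ⟨ℓ, h.symm⟩ hN
      · rintro (⟨h, -⟩ | ⟨h, h', h''⟩)
        · exact absurd ⟨ℓ, h.symm⟩ ha
        · exact absurd ⟨ℓ, h.symm, h', h''⟩ hb

/-- If `(i 1, …, i k)` and `(j 1, …, j k)` are tuples of pairwise distinct natural numbers with
the same quantifier-free type in the ordered graph (same edges and same relative order), then
there is an isomorphism of Boolean algebras from the Boolean subalgebra of `Set I` generated by
`{u (i 1), …, u (i k)}` onto the one generated by `{u (j 1), …, u (j k)}` sending each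
`u (i ℓ)` to `u (j ℓ)`. -/
theorem subalgebra_isomorphism (E : ℕ → ℕ → Prop)
    (hsym : ∀ a b, E a b → E b a) (hirr : ∀ a, ¬ E a a)
    (k : ℕ) (i j : Fin k → ℕ)
    (hi : Function.Injective i) (hj : Function.Injective j)
    (hE : ∀ n m : Fin k, E (i n) (i m) ↔ E (j n) (j m))
    (hord : ∀ n m : Fin k, i n < i m ↔ j n < j m) :
    ∃ g : Set I → Set I,
      Set.BijOn g (boolGen (Set.range fun ℓ => u E (i ℓ)))
        (boolGen (Set.range fun ℓ => u E (j ℓ))) ∧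
      (∀ x ∈ boolGen (Set.range fun ℓ => u E (i ℓ)),
        ∀ y ∈ boolGen (Set.range fun ℓ => u E (i ℓ)), g (x ∩ y) = g x ∩ g y) ∧
      (∀ x ∈ boolGen (Set.range fun ℓ => u E (i ℓ)),
        ∀ y ∈ boolGen (Set.range fun ℓ => u E (i ℓ)), g (x ∪ y) = g x ∪ g y) ∧
      (∀ x ∈ boolGen (Set.range fun ℓ => u E (i ℓ)), g xᶜ = (g x)ᶜ) ∧
      g ∅ = ∅ ∧ g Set.univ = Set.univ ∧
      ∀ ℓ : Fin k, g (u E (i ℓ)) = u E (j ℓ) := by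
  have hij := pat_range E k i j hi hj hE hord
  have hji := pat_range E k j i hj hi (fun n m => (hE n m).symm) (fun n m => (hord n m).symm)
  have key : ∀ A : Set (Set (Fin k)),
      pat E j ⁻¹' (pat E i '' (pat E i ⁻¹' A)) = pat E j ⁻¹' A := by
    intro A
    ext q
    constructor
    · rintro ⟨p, hp, hpq⟩
      change pat E j q ∈ A
      rw [← hpq]
      exact hp
    · intro hq
      obtain ⟨p, hp⟩ := hji q
      refine ⟨p, ?_, hp⟩
      change pat E i p ∈ A
      rw [hp]
      exact hq
  refine ⟨fun x => pat E j ⁻¹' (pat E i '' x), ⟨?_, ?_, ?_⟩, ?_, ?_, ?_, ?_, ?_, ?_⟩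
  · intro x hx
    obtain ⟨A, rfl, hA⟩ := boolGen_form E i j x hx
    simpa only [key] using hA
  · intro x hx y hy hxy
    obtain ⟨A, rfl, -⟩ := boolGen_form E i j x hx
    obtain ⟨B, rfl, -⟩ := boolGen_form E i j y hy
    simp only [key] at hxy
    ext p
    obtain ⟨q, hq⟩ := hij p
    have := Set.ext_iff.1 hxy q
    simpa only [Set.mem_preimage, hq] using this
  · intro y hy
    obtain ⟨A, rfl, hA⟩ := boolGen_form E j i y hy
    exact ⟨_, hA, key A⟩
  · intro x hx y hy
    obtain ⟨A, rfl, -⟩ := boolGen_form E i j x hx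
    obtain ⟨B, rfl, -⟩ := boolGen_form E i j y hy
    simp only [← Set.preimage_inter, key]
  · intro x hx y hy
    obtain ⟨A, rfl, -⟩ := boolGen_form E i j x hx
    obtain ⟨B, rfl, -⟩ := boolGen_form E i j y hy
    simp only [← Set.preimage_union, key]
  · intro x hx
    obtain ⟨A, rfl, -⟩ := boolGen_form E i j x hx
    simp only [← Set.preimage_compl, key]
  · simp
  · exact key Set.univ
  · intro ℓ
    exact key {s | ℓ ∈ s}
end
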